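/- For every term T and substitution σ, the interpretation ⟦T⟧σ is a computability predicate: ⟦T⟧σ ⊆ SN, ⟦T⟧σ is closed under reduction, and every neutral term all of whose one-step reducts belong to ⟦T⟧σ belongs to ⟦T⟧σ. -/

import Mathlib

set_option maxHeartbeats 1000000

/-! # Terms of λΠ/R (de Bruijn representation) -/

inductive Trm (F : Type) : Type
  | type : Trm F
  | kind : Trm F
  | var : ℕ → Trm F
  | sym : F → Trm F
  | pi : Trm F → Trm F → Trm F
  | app : Trm F → Trm F → Trm F
  | lam : Trm F → Trm F → Trm F

namespace Trm

variable {F : Type}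

/-- Lifting of a renaming under a binder. -/
def upRen (ρ : ℕ → ℕ) : ℕ → ℕ
  | 0 => 0
  | n + 1 => ρ n + 1

/-- Renaming of (de Bruijn) variables. -/
def rename (ρ : ℕ → ℕ) : Trm F → Trm F
  | .type => .type
  | .kind => .kind
  | .var n => .var (ρ n)
  | .sym f => .sym f
  | .pi A B => .pi (rename ρ A) (rename (upRen ρ) B)
  | .app t u => .app (rename ρ t) (rename ρ u)
  | .lam A b => .lam (rename ρ A) (rename (upRen ρ) b)

/-- Lifting of a substitution under a binder. -/
def up (σ : ℕ → Trm F) : ℕ → Trm F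
  | 0 => .var 0
  | n + 1 => rename Nat.succ (σ n)

/-- Capture-avoiding (parallel) substitution. -/
def subst (σ : ℕ → Trm F) : Trm F → Trm F
  | .type => .type
  | .kind => .kind
  | .var n => σ n
  | .sym f => .sym f
  | .pi A B => .pi (subst σ A) (subst (up σ) B)
  | .app t u => .app (subst σ t) (subst σ u)
  | .lam A b => .lam (subst σ A) (subst (up σ) b)

/-- Cons of a term on a substitution: `scons a σ` maps `0` to `a` and `n+1` to `σ n`. -/
def scons (a : Trm F) (σ : ℕ → Trm F) : ℕ → Trm F
  | 0 => a
  | n + 1 => σ n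

/-- Substitution of the first free variable: `t[x ↦ a]`. -/
def subst1 (a t : Trm F) : Trm F := subst (scons a .var) t

/-- Shifting of all free variables. -/
def shift : Trm F → Trm F := rename Nat.succ

/-- Application of a head term to a list of arguments: `appList h [t1,…,tn] = h t1 … tn`. -/
def appList (h : Trm F) : List (Trm F) → Trm F
  | [] => h
  | a :: as => appList (.app h a) as

/-- Free (de Bruijn) variables of a term. -/
def FV : Trm F → Set ℕ
  | .type => ∅
  | .kind => ∅
  | .var n => {n}
  | .sym _ => ∅
  | .pi A B => FV A ∪ {n | n + 1 ∈ FV B}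
  | .app t u => FV t ∪ FV u
  | .lam A b => FV A ∪ {n | n + 1 ∈ FV b}

/-- The class 𝕂 of kinds: `K = TYPE | Πx:t.K`. -/
def IsKind : Trm F → Prop
  | .type => True
  | .pi _ B => IsKind B
  | _ => False

/-- Sorts: `TYPE` and `KIND`. -/
def IsSort (s : Trm F) : Prop := s = .type ∨ s = .kind

/-- The product arity of a term: the number of leading products. -/
def piArity : Trm F → ℕ
  | .pi _ B => piArity B + 1
  | _ => 0

/-- Strip `n` leading products. -/
def piCodN : ℕ → Trm F → Trm F
  | 0, T => T
  | n + 1, .pi _ B => piCodN n B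
  | _ + 1, T => T

/-- The first `n` domains of the leading products, as a de Bruijn context
(type of variable `0` first, i.e. innermost first). -/
def teleN : ℕ → Trm F → List (Trm F)
  | 0, _ => []
  | n + 1, .pi A B => teleN n B ++ [A]
  | _ + 1, _ => []

/-- The full telescope of leading products, as a de Bruijn context. -/
def telescope (T : Trm F) : List (Trm F) := teleN (piArity T) T

/-- The domains of the leading products, outermost first. -/
def piDoms : Trm F → List (Trm F)
  | .pi A B => A :: piDoms B
  | _ => []

end Trm

/-- The subterm relation (reflexive and transitive). -/
inductive Subterm {F : Type} : Trm F → Trm F → Prop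
  | refl (t : Trm F) : Subterm t t
  | piL {t A B} : Subterm t A → Subterm t (.pi A B)
  | piR {t A B} : Subterm t B → Subterm t (.pi A B)
  | appL {t u v} : Subterm t u → Subterm t (.app u v)
  | appR {t u v} : Subterm t v → Subterm t (.app u v)
  | lamL {t A b} : Subterm t A → Subterm t (.lam A b)
  | lamR {t A b} : Subterm t b → Subterm t (.lam A b)

/-! # Rewriting -/

/-- A set of rewriting rules `l → r`. -/
abbrev Rules (F : Type) := Set (Trm F × Trm F)

/-- `R` is a rewriting system: for every rule `l → r`, `FV(r) ⊆ FV(l)` and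
`l` is of the form `f l⃗`. -/
def IsRewriteSystem {F : Type} (R : Rules F) : Prop :=
  ∀ p ∈ R, Trm.FV p.2 ⊆ Trm.FV p.1 ∧ ∃ (f : F) (ls : List (Trm F)), p.1 = Trm.appList (.sym f) ls

/-- A symbol is defined if it heads the left-hand side of some rule. -/
def Defined {F : Type} (R : Rules F) (f : F) : Prop :=
  ∃ (ls : List (Trm F)) (r : Trm F), (Trm.appList (.sym f) ls, r) ∈ R

/-- One-step reduction `→ = →β ∪ →R`: β-reduction together with the closure of the
rules of `R` by substitution and context. -/
inductive Red {F : Type} (R : Rules F) : Trm F → Trm F → Prop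
  | beta (A b a : Trm F) : Red R (.app (.lam A b) a) (Trm.subst1 a b)
  | rule {l r : Trm F} (σ : ℕ → Trm F) : (l, r) ∈ R → Red R (Trm.subst σ l) (Trm.subst σ r)
  | appL {t t' u} : Red R t t' → Red R (.app t u) (.app t' u)
  | appR {t u u'} : Red R u u' → Red R (.app t u) (.app t u')
  | piL {A A' B} : Red R A A' → Red R (.pi A B) (.pi A' B)
  | piR {A B B'} : Red R B B' → Red R (.pi A B) (.pi A B')
  | lamL {A A' b} : Red R A A' → Red R (.lam A b) (.lam A' b)
  | lamR {A b b'} : Red R b b' → Red R (.lam A b) (.lam A b')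

/-- Multi-step reduction `→*`. -/
def RedStar {F : Type} (R : Rules F) : Trm F → Trm F → Prop := Relation.ReflTransGen (Red R)

/-- Joinability `↓`. -/
def Joinable {F : Type} (R : Rules F) (t u : Trm F) : Prop :=
  ∃ v, RedStar R t v ∧ RedStar R u v

/-- Local confluence: `← · → ⊆ →* · *←`. -/
def LocallyConfluent {F : Type} (R : Rules F) : Prop :=
  ∀ t u v, Red R t u → Red R t v → Joinable R u v

/-- `t` is strongly normalizing (terminating): no infinite reduction sequence from `t`. -/
def SN {F : Type} (R : Rules F) (t : Trm F) : Prop := Acc (fun a b => Red R b a) t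

/-- The set of strongly normalizing terms. -/
def SNset {F : Type} (R : Rules F) : Set (Trm F) := {t | SN R t}

/-- `t` is in normal form. -/
def NormalForm {F : Type} (R : Rules F) (t : Trm F) : Prop := ∀ u, ¬ Red R t u

/-- Neutral terms: `(λx:A.t)u v⃗`, `x v⃗`, or `f v⃗` where every rule `f l⃗ → r ∈ R`
satisfies `|l⃗| ≤ |v⃗|`. -/
def Neutral {F : Type} (R : Rules F) (t : Trm F) : Prop :=
  (∃ (A b a : Trm F) (vs : List (Trm F)), t = Trm.appList (.app (.lam A b) a) vs) ∨
  (∃ (x : ℕ) (vs : List (Trm F)), t = Trm.appList (.var x) vs) ∨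
  (∃ (f : F) (vs : List (Trm F)), t = Trm.appList (.sym f) vs ∧
    ∀ (ls : List (Trm F)) (r : Trm F), (Trm.appList (.sym f) ls, r) ∈ R → ls.length ≤ vs.length)

/-- Computability predicates: `S ⊆ SN`, `S` is closed under reduction, and `S` contains
every neutral term all of whose one-step reducts are in `S`. -/
def IsCompPred {F : Type} (R : Rules F) (S : Set (Trm F)) : Prop :=
  S ⊆ SNset R ∧ (∀ t ∈ S, ∀ u, Red R t u → u ∈ S) ∧
  (∀ t, Neutral R t → (∀ u, Red R t u → u ∈ S) → t ∈ S)

/-! # Typing: λP extended with function symbols and conversion modulo `→` -/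

/-- The typing rules of λΠ/R: the rules of λP (in de Bruijn presentation) with the extra
rule (fun) `⊢ f : Θ_f` and conversion up to joinability for `→`. -/
inductive Typing {F : Type} (R : Rules F) (Θ sΘ : F → Trm F) :
    List (Trm F) → Trm F → Trm F → Prop
  | ax : Typing R Θ sΘ [] .type .kind
  | var {Γ A s} : Trm.IsSort s → Typing R Θ sΘ Γ A s →
      Typing R Θ sΘ (A :: Γ) (.var 0) (Trm.shift A)
  | weak {Γ A s b B} : Trm.IsSort s → Typing R Θ sΘ Γ A s → Typing R Θ sΘ Γ b B →
      Typing R Θ sΘ (A :: Γ) (Trm.shift b) (Trm.shift B)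
  | prod {Γ A B s} : Trm.IsSort s → Typing R Θ sΘ Γ A .type → Typing R Θ sΘ (A :: Γ) B s →
      Typing R Θ sΘ Γ (.pi A B) s
  | abs {Γ A b B s} : Trm.IsSort s → Typing R Θ sΘ (A :: Γ) b B →
      Typing R Θ sΘ Γ (.pi A B) s → Typing R Θ sΘ Γ (.lam A b) (.pi A B)
  | app {Γ t a A B} : Typing R Θ sΘ Γ t (.pi A B) → Typing R Θ sΘ Γ a A →
      Typing R Θ sΘ Γ (.app t a) (Trm.subst1 a B)
  | conv {Γ a A B s} : Typing R Θ sΘ Γ a A → Joinable R A B → Typing R Θ sΘ Γ B s →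
      Trm.IsSort s → Typing R Θ sΘ Γ a B
  | symb (f : F) : Trm.IsSort (sΘ f) → Typing R Θ sΘ [] (Θ f) (sΘ f) →
      Typing R Θ sΘ [] (.sym f) (Θ f)

/-- `→` preserves typing (subject reduction). -/
def PresTyping {F : Type} (R : Rules F) (Θ sΘ : F → Trm F) : Prop :=
  ∀ Γ t u T, Typing R Θ sΘ Γ t T → Red R t u → Typing R Θ sΘ Γ u T

/-- A substitution `γ` is well-typed from `Δ` to `Γ` (for a generic typing judgment `Ty`):
for all `(x : T) ∈ Δ`, `Ty Γ (xγ) (Tγ)`. -/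
def SubstTyped {F : Type} (Ty : List (Trm F) → Trm F → Trm F → Prop)
    (Γ : List (Trm F)) (γ : ℕ → Trm F) (Δ : List (Trm F)) : Prop :=
  ∀ i A, Δ[i]? = some A → Ty Γ (γ i) (Trm.subst (fun j => γ (j + i + 1)) A)

/-! # Interpretation of types as computability predicates -/

/-- `𝕀`: partial functions from terms to sets of terms. -/
abbrev Interp (F : Type) := Trm F → Part (Set (Trm F))

/-- Graph inclusion of partial functions. -/
def InterpLE {F : Type} (I J : Interp F) : Prop := ∀ T S, S ∈ I T → S ∈ J T

/-- `I` is the least fixpoint of `φ` on `𝕀` (ordered by graph inclusion). -/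
def IsLfpInterp {F : Type} (φ : Interp F → Interp F) (I : Interp F) : Prop :=
  φ I = I ∧ ∀ J, φ J = J → InterpLE I J

/-- The domain `D(I)`: terminating terms `T` such that whenever `T →* Πx:A.B`,
`A ∈ dom(I)` and `B[x↦a] ∈ dom(I)` for all `a ∈ I(A)`. -/
def domD {F : Type} (R : Rules F) (I : Interp F) : Set (Trm F) :=
  {T | SN R T ∧ ∀ A B, RedStar R T (.pi A B) →
    (I A).Dom ∧ ∀ S ∈ I A, ∀ a ∈ S, (I (Trm.subst1 a B)).Dom}

/-- `{t | ∀ a ∈ I(A), t a ∈ I(B[x↦a])}` (relational reading of the partial function `I`). -/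
def piPart {F : Type} (I : Interp F) (A B : Trm F) : Set (Trm F) :=
  {t | ∀ S ∈ I A, ∀ a ∈ S, ∀ S' ∈ I (Trm.subst1 a B), Trm.app t a ∈ S'}

open Classical in
/-- The monotone function `F : 𝕀 → 𝕀`: `dom(F(I)) = D(I)`; `F(I)(T) = SN` if the normal
form of `T` is not a product; `F(I)(T) = {t | ∀ a ∈ I(A), t a ∈ I(B[x↦a])}` if the normal
form of `T` is `Πx:A.B`. -/
noncomputable def interpF {F : Type} (R : Rules F) (I : Interp F) : Interp F := fun T =>
  ⟨T ∈ domD R I, fun _ =>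
    if h : ∃ A B, RedStar R T (.pi A B) ∧ NormalForm R (.pi A B) then
      piPart I h.choose h.choose_spec.choose
    else SNset R⟩

/-- The value of a partial interpretation at `T` (as a set). -/
def partMem {F : Type} (I : Interp F) (T : Trm F) : Set (Trm F) := {t | ∀ S ∈ I T, t ∈ S}

open Classical in
/-- The interpretation `⟦T⟧σ` of a term `T` wrt a substitution `σ`, relative to the least
fixpoint `I = ℐ` of `interpF`: `⟦s⟧σ = 𝒟` for `s` a sort;
`⟦Πx:A.K⟧σ = {t | ∀ a ∈ ⟦A⟧σ, t a ∈ ⟦K⟧[x↦a,σ]}` for `K` a kind;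
`⟦T⟧σ = ℐ(Tσ)` if `T` is neither a kind nor `KIND` and `Tσ ∈ 𝒟`; `⟦T⟧σ = SN` otherwise. -/
noncomputable def interp {F : Type} (R : Rules F) (I : Interp F) :
    Trm F → (ℕ → Trm F) → Set (Trm F)
  | .type, _ => domD R I
  | .kind, _ => domD R I
  | .pi A B, σ =>
      if Trm.IsKind B then
        {t | ∀ a ∈ interp R I A σ, Trm.app t a ∈ interp R I B (Trm.scons a σ)}
      else if Trm.subst σ (.pi A B) ∈ domD R I then partMem I (Trm.subst σ (.pi A B))
      else SNset R
  | .var n, σ =>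
      if Trm.subst σ (.var n) ∈ domD R I then partMem I (Trm.subst σ (.var n)) else SNset R
  | .sym g, σ =>
      if Trm.subst σ (.sym g) ∈ domD R I then partMem I (Trm.subst σ (.sym g)) else SNset R
  | .app t u, σ =>
      if Trm.subst σ (.app t u) ∈ domD R I then partMem I (Trm.subst σ (.app t u)) else SNset R
  | .lam A b, σ =>
      if Trm.subst σ (.lam A b) ∈ domD R I then partMem I (Trm.subst σ (.lam A b)) else SNset R

/-- `σ ⊨ Γ`: a substitution is adequate wrt an environment. -/
def Models {F : Type} (R : Rules F) (I : Interp F) (σ : ℕ → Trm F) (Γ : List (Trm F)) : Prop :=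
  ∀ i A, Γ[i]? = some A → σ i ∈ interp R I A (fun j => σ (j + i + 1))

/-- The typing map `Θ` is adequate: `f ∈ ⟦Θ_f⟧` whenever `⊢ Θ_f : s_f` and `Θ_f ∈ ⟦s_f⟧`. -/
def Adequate {F : Type} (R : Rules F) (Θ sΘ : F → Trm F) (I : Interp F) : Prop :=
  ∀ f : F, Typing R Θ sΘ [] (Θ f) (sΘ f) → Θ f ∈ interp R I (sΘ f) Trm.var →
    Trm.sym f ∈ interp R I (Θ f) Trm.var

/-- The substitution `[x⃗ ↦ l⃗]` (where `ls` lists the images of variables `0, 1, …`). -/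
def mkSubst {F : Type} (ls : List (Trm F)) : ℕ → Trm F := fun i =>
  (ls[i]?).getD (.var (i - ls.length))

/-- Composition of substitutions: `x ↦ (xγ)σ`. -/
def compSubst {F : Type} (γ σ : ℕ → Trm F) : ℕ → Trm F := fun i => Trm.subst σ (γ i)

/-- The set `ℂ` of terms `f t⃗` with `|t⃗| = arit(Θ_f)`, `⊢ Θ_f : s_f`, `Θ_f ∈ ⟦s_f⟧` and
`[x⃗↦t⃗] ⊨ Γ_f`. -/
def CC {F : Type} (R : Rules F) (Θ sΘ : F → Trm F) (I : Interp F) : Set (Trm F) :=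
  {t | ∃ (f : F) (ts : List (Trm F)), t = Trm.appList (.sym f) ts ∧
    ts.length = Trm.piArity (Θ f) ∧
    Typing R Θ sΘ [] (Θ f) (sΘ f) ∧ Θ f ∈ interp R I (sΘ f) Trm.var ∧
    Models R I (mkSubst ts.reverse) (Trm.telescope (Θ f))}

/-! # Dependency pairs -/

/-- Occurrences of `p` in a term, not at the root, such that `p` is not further applied
(i.e. `p` collects all the arguments of its head at this occurrence). -/
inductive MaxOccNR {F : Type} (p : Trm F) : Trm F → Prop
  | appL {u v} : MaxOccNR p u → MaxOccNR p (.app u v)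
  | appR {u v} : MaxOccNR p v → MaxOccNR p (.app u v)
  | appRroot {u} : MaxOccNR p (.app u p)
  | piL {A B} : MaxOccNR p A → MaxOccNR p (.pi A B)
  | piLroot {B} : MaxOccNR p (.pi p B)
  | piR {A B} : MaxOccNR p B → MaxOccNR p (.pi A B)
  | piRroot {A} : MaxOccNR p (.pi A p)
  | lamL {A b} : MaxOccNR p A → MaxOccNR p (.lam A b)
  | lamLroot {b} : MaxOccNR p (.lam p b)
  | lamR {A b} : MaxOccNR p b → MaxOccNR p (.lam A b)
  | lamRroot {A} : MaxOccNR p (.lam A p)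

/-- `p` occurs in `t` as a maximal application. -/
def MaxOcc {F : Type} (p t : Trm F) : Prop := t = p ∨ MaxOccNR p t

/-- Dependency pairs: `f l⃗ > g m⃗` iff there is a rule `f l⃗ → r ∈ R`, `g` is defined and
`g m⃗` is a subterm of `r` such that `m⃗` are all the arguments to which `g` is applied. -/
def DepPair {F : Type} (R : Rules F) (f : F) (ls : List (Trm F)) (g : F)
    (ms : List (Trm F)) : Prop :=
  Defined R g ∧ ∃ r, (Trm.appList (.sym f) ls, r) ∈ R ∧ MaxOcc (Trm.appList (.sym g) ms) r

/-- `f t⃗ →arg f u⃗`: reduction of exactly one argument. -/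
def ArgRed {F : Type} (R : Rules F) (t u : Trm F) : Prop :=
  ∃ (f : F) (pre post : List (Trm F)) (a b : Trm F), Red R a b ∧
    t = Trm.appList (.sym f) (pre ++ a :: post) ∧ u = Trm.appList (.sym f) (pre ++ b :: post)

/-- `>ₛ`: the closure of the dependency pair relation by substitution and left-application:
`f t₁…t_p >ₛ g u₁…u_q` iff there are a dependency pair `f l₁…l_i > g m₁…m_j` with `i ≤ p`
and `j ≤ q` and a substitution `σ` such that `t_k →* l_kσ` for `k ≤ i` and `m_kσ = u_k`
for `k ≤ j`. -/
def GTsub {F : Type} (R : Rules F) (t u : Trm F) : Prop :=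
  ∃ (f g : F) (ts us ls ms : List (Trm F)) (σ : ℕ → Trm F),
    t = Trm.appList (.sym f) ts ∧ u = Trm.appList (.sym g) us ∧
    DepPair R f ls g ms ∧ ls.length ≤ ts.length ∧ ms.length ≤ us.length ∧
    (∀ (k : ℕ) (tk lk : Trm F), ts[k]? = some tk → ls[k]? = some lk → RedStar R tk (Trm.subst σ lk)) ∧
    (∀ (k : ℕ) (mk : Trm F), ms[k]? = some mk → us[k]? = some (Trm.subst σ mk))

/-- The call relation `≻̃ = →arg* · >ₛ` on `ℂ`. -/
def CallRel {F : Type} (R : Rules F) (Θ sΘ : F → Trm F) (I : Interp F) (t u : Trm F) : Prop :=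
  t ∈ CC R Θ sΘ I ∧ u ∈ CC R Θ sΘ I ∧
    ∃ v, Relation.ReflTransGen (ArgRed R) t v ∧ GTsub R v u

/-! # Precedence and well-structured systems -/

/-- `f ⪰ g` (one step): `g` occurs in `Θ_f` or in the right-hand side of a rule of `f`. -/
def PrecBase {F : Type} (R : Rules F) (Θ : F → Trm F) (f g : F) : Prop :=
  Subterm (.sym g) (Θ f) ∨
  ∃ (ls : List (Trm F)) (r : Trm F), (Trm.appList (.sym f) ls, r) ∈ R ∧ Subterm (.sym g) r

/-- `⪰`: the smallest quasi-order containing `PrecBase`. -/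
def Preceq {F : Type} (R : Rules F) (Θ : F → Trm F) : F → F → Prop :=
  Relation.ReflTransGen (PrecBase R Θ)

/-- `≻`: the strict part of `⪰`. -/
def Prec {F : Type} (R : Rules F) (Θ : F → Trm F) (f g : F) : Prop :=
  Preceq R Θ f g ∧ ¬ Preceq R Θ g f

/-- The restricted type system `⊢_{≺ f}`: as `Typing`, but function symbols may only be
introduced when strictly smaller than `f` in the precedence. -/
inductive LTyp {F : Type} (R : Rules F) (Θ sΘ : F → Trm F) (f : F) :
    List (Trm F) → Trm F → Trm F → Prop
  | ax : LTyp R Θ sΘ f [] .type .kind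
  | var {Γ A s} : Trm.IsSort s → LTyp R Θ sΘ f Γ A s →
      LTyp R Θ sΘ f (A :: Γ) (.var 0) (Trm.shift A)
  | weak {Γ A s b B} : Trm.IsSort s → LTyp R Θ sΘ f Γ A s → LTyp R Θ sΘ f Γ b B →
      LTyp R Θ sΘ f (A :: Γ) (Trm.shift b) (Trm.shift B)
  | prod {Γ A B s} : Trm.IsSort s → LTyp R Θ sΘ f Γ A .type → LTyp R Θ sΘ f (A :: Γ) B s →
      LTyp R Θ sΘ f Γ (.pi A B) s
  | abs {Γ A b B s} : Trm.IsSort s → LTyp R Θ sΘ f (A :: Γ) b B →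
      LTyp R Θ sΘ f Γ (.pi A B) s → LTyp R Θ sΘ f Γ (.lam A b) (.pi A B)
  | app {Γ t a A B} : LTyp R Θ sΘ f Γ t (.pi A B) → LTyp R Θ sΘ f Γ a A →
      LTyp R Θ sΘ f Γ (.app t a) (Trm.subst1 a B)
  | conv {Γ a A B s} : LTyp R Θ sΘ f Γ a A → Joinable R A B → LTyp R Θ sΘ f Γ B s →
      Trm.IsSort s → LTyp R Θ sΘ f Γ a B
  | symb (g : F) : Prec R Θ f g → Trm.IsSort (sΘ g) → LTyp R Θ sΘ f [] (Θ g) (sΘ g) →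
      LTyp R Θ sΘ f [] (.sym g) (Θ g)

/-- The arguments `y⃗γ = [y₁γ, …, y_jγ]` of an instantiated dependency pair right-hand
side, where `y_j` is de Bruijn variable `0`. -/
def dpArgs {F : Type} (γ : ℕ → Trm F) (j : ℕ) : List (Trm F) :=
  (List.range j).reverse.map γ

/-- The restricted type system `⊢_{f l⃗}` (computability closure): as `Typing`, except that
types are required to be typable using symbols smaller than `f` only, and function symbols
are introduced either as undefined constants or through instances of dependency pairs of
`f l⃗`. -/
inductive RTyp {F : Type} (R : Rules F) (Θ sΘ : F → Trm F) (f : F) (ls : List (Trm F)) :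
    List (Trm F) → Trm F → Trm F → Prop
  | ax : RTyp R Θ sΘ f ls [] .type .kind
  | var {Γ A s} : Trm.IsSort s → LTyp R Θ sΘ f Γ A s →
      RTyp R Θ sΘ f ls (A :: Γ) (.var 0) (Trm.shift A)
  | weak {Γ A s b B} : Trm.IsSort s → LTyp R Θ sΘ f Γ A s → RTyp R Θ sΘ f ls Γ b B →
      RTyp R Θ sΘ f ls (A :: Γ) (Trm.shift b) (Trm.shift B)
  | prod {Γ A B s} : Trm.IsSort s → RTyp R Θ sΘ f ls Γ A .type →
      RTyp R Θ sΘ f ls (A :: Γ) B s → RTyp R Θ sΘ f ls Γ (.pi A B) s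
  | abs {Γ A b B s} : Trm.IsSort s → RTyp R Θ sΘ f ls (A :: Γ) b B →
      LTyp R Θ sΘ f Γ (.pi A B) s → RTyp R Θ sΘ f ls Γ (.lam A b) (.pi A B)
  | app {Γ t a A B s} : Trm.IsSort s → RTyp R Θ sΘ f ls Γ t (.pi A B) →
      RTyp R Θ sΘ f ls Γ a A → LTyp R Θ sΘ f Γ (.pi A B) s →
      RTyp R Θ sΘ f ls Γ (.app t a) (Trm.subst1 a B)
  | conv {Γ a A B s s'} : Trm.IsSort s → Trm.IsSort s' → RTyp R Θ sΘ f ls Γ a A →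
      Joinable R A B → LTyp R Θ sΘ f Γ B s → LTyp R Θ sΘ f Γ A s' →
      RTyp R Θ sΘ f ls Γ a B
  | dp {Γ : List (Trm F)} (g : F) (γ : ℕ → Trm F) (j : ℕ) :
      j ≤ Trm.piArity (Θ g) → Trm.IsSort (sΘ g) → LTyp R Θ sΘ f [] (Θ g) (sΘ g) →
      (∀ i A, (Trm.teleN j (Θ g))[i]? = some A →
        RTyp R Θ sΘ f ls Γ (γ i) (Trm.subst (fun k => γ (k + i + 1)) A)) →
      DepPair R f ls g (dpArgs γ j) →
      RTyp R Θ sΘ f ls Γ (Trm.appList (.sym g) (dpArgs γ j)) (Trm.subst γ (Trm.piCodN j (Θ g)))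
  | const (g : F) : ¬ Defined R g → Trm.IsSort (sΘ g) → LTyp R Θ sΘ f [] (Θ g) (sΘ g) →
      RTyp R Θ sΘ f ls [] (.sym g) (Θ g)

/-- `R` is well-structured (wrt the assignment `Δ` of an environment to every rule):
(a) `≻` is well-founded; (b) `|l⃗| ≤ arit(Θ_f)` for every rule `f l⃗ → r`;
(c) `|m⃗| ≤ arit(Θ_g)` for every dependency pair `f l⃗ > g m⃗`;
(d) `Δ_{f l⃗→r} ⊢_{f l⃗} r : U[x⃗↦l⃗]` for every rule `f l⃗ → r`, where `Θ_f = Πx⃗:T⃗.U`. -/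
def WellStructured {F : Type} (R : Rules F) (Θ sΘ : F → Trm F)
    (Δ : Trm F → Trm F → List (Trm F)) : Prop :=
  WellFounded (fun g f => Prec R Θ f g) ∧
  (∀ l r, (l, r) ∈ R → ∀ (f : F) ls, l = Trm.appList (.sym f) ls →
    ls.length ≤ Trm.piArity (Θ f)) ∧
  (∀ (f : F) ls (g : F) ms, DepPair R f ls g ms → ms.length ≤ Trm.piArity (Θ g)) ∧
  (∀ l r, (l, r) ∈ R → ∀ (f : F) ls, l = Trm.appList (.sym f) ls →
    RTyp R Θ sΘ f ls (Δ l r) r (Trm.subst (mkSubst ls.reverse) (Trm.piCodN ls.length (Θ f))))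

/-- `R` is accessible: for every rule `f l⃗ → r` with `Θ_f = Πx⃗:T⃗.U`, `|x⃗| = |l⃗|`, and
every substitution `σ`, `σ ⊨ Δ_{f l⃗→r}` whenever `⊢ Θ_f : s_f`, `Θ_f ∈ ⟦s_f⟧` and
`[x⃗↦l⃗]σ ⊨ x⃗:T⃗`. -/
def Accessible {F : Type} (R : Rules F) (Θ sΘ : F → Trm F) (I : Interp F)
    (Δ : Trm F → Trm F → List (Trm F)) : Prop :=
  ∀ l r, (l, r) ∈ R → ∀ (f : F) ls, l = Trm.appList (.sym f) ls → ∀ σ : ℕ → Trm F,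
    Typing R Θ sΘ [] (Θ f) (sΘ f) → Θ f ∈ interp R I (sΘ f) Trm.var →
    Models R I (compSubst (mkSubst ls.reverse) σ) (Trm.teleN ls.length (Θ f)) →
    Models R I σ (Δ l r)

/-- A term in `𝕂 ∪ {KIND}`. -/
def IsKindLike {F : Type} (t : Trm F) : Prop := Trm.IsKind t ∨ t = .kind

/-- `R` is plain function-passing (PFP): for every rule `f l⃗ → r` with `Θ_f = Πx⃗:T⃗.U` and
`|x⃗| = |l⃗|`, no `l_i` is a kind or `KIND`, and every `(y : T) ∈ Δ_{f l⃗→r}` satisfies: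
either there is `i` with `y = l_i` and `T = T_i[x⃗↦l⃗]`, or `y ∈ FV(l_i)` and `T = D t⃗`
with `D` undefined and `|t⃗| = arit(Θ_D)`. -/
def PFP {F : Type} (R : Rules F) (Θ : F → Trm F) (Δ : Trm F → Trm F → List (Trm F)) : Prop :=
  ∀ l r, (l, r) ∈ R → ∀ (f : F) ls, l = Trm.appList (.sym f) ls →
    (∀ li ∈ ls, ¬ IsKindLike li) ∧
    (∀ i A, (Δ l r)[i]? = some A →
      (∃ (k : ℕ) (Tk : Trm F), ls[k]? = some (Trm.var i) ∧ (Trm.piDoms (Θ f))[k]? = some Tk ∧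
        Trm.rename (fun j => j + i + 1) A = Trm.subst (mkSubst ((ls.take k).reverse)) Tk) ∨
      ((∃ (k : ℕ) (lk : Trm F), ls[k]? = some lk ∧ i ∈ Trm.FV lk) ∧
        ∃ (D : F) (ts : List (Trm F)), Trm.rename (fun j => j + i + 1) A =
          Trm.appList (.sym D) ts ∧ ¬ Defined R D ∧ ts.length = Trm.piArity (Θ D)))

/-! # Size-change termination -/

/-- Entries of size-change matrices: `−1`, `0` or `∞`. -/
inductive SCTe : Type
  | minusOne : SCTe
  | zero : SCTe
  | infty : SCTe
deriving DecidableEq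

/-- Min-plus multiplication of entries (addition, truncated at `−1`). -/
def SCTe.comp : SCTe → SCTe → SCTe
  | .infty, _ => .infty
  | _, .infty => .infty
  | .minusOne, _ => .minusOne
  | _, .minusOne => .minusOne
  | .zero, .zero => .zero

/-- Minimum of entries (`−1 < 0 < ∞`). -/
def SCTe.min : SCTe → SCTe → SCTe
  | .minusOne, _ => .minusOne
  | _, .minusOne => .minusOne
  | .zero, _ => .zero
  | .infty, x => x

/-- Base of the relation `⊵`: `f t₁…t_n ⊵ t_i` for `f ∈ F`. -/
def ArgSubBase {F : Type} (t u : Trm F) : Prop :=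
  ∃ (f : F) (ts : List (Trm F)), t = Trm.appList (.sym f) ts ∧ u ∈ ts

/-- `⊵`: the smallest transitive relation such that `f t₁…t_n ⊵ t_i` for `f ∈ F`. -/
def ArgGT {F : Type} : Trm F → Trm F → Prop := Relation.TransGen ArgSubBase

open Classical in
/-- The size-change matrix of a dependency pair `f l₁…l_p > g m₁…m_q`:
`a_{ij} = −1` if `l_i ⊵ m_j`, `a_{ij} = 0` if `l_i = m_j`, `a_{ij} = ∞` otherwise
(in particular if `i > p` or `j > q`). -/
noncomputable def dpMatrix {F : Type} (ls ms : List (Trm F)) : ℕ → ℕ → SCTe := fun i j =>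
  match ls[i]?, ms[j]? with
  | some li, some mj =>
      if ArgGT li mj then .minusOne else if li = mj then .zero else .infty
  | _, _ => .infty

/-- Min-plus product of matrices, the middle dimension being `d`. -/
def matComp (d : ℕ) (M N : ℕ → ℕ → SCTe) : ℕ → ℕ → SCTe := fun i j =>
  ((List.range d).map fun k => (M i k).comp (N k j)).foldr SCTe.min .infty

/-- The transitive closure of the call graph of `R`: edges are labeled by the matrices of
the dependency pairs, multiplied in the min-plus semiring along paths. -/
inductive TCEdge {F : Type} (R : Rules F) (Θ : F → Trm F) : F → F → (ℕ → ℕ → SCTe) → Prop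
  | base {f g : F} {ls ms : List (Trm F)} : DepPair R f ls g ms →
      TCEdge R Θ f g (dpMatrix ls ms)
  | comp {f g h : F} {M N : ℕ → ℕ → SCTe} : TCEdge R Θ f g M → TCEdge R Θ g h N →
      TCEdge R Θ f h (matComp (Trm.piArity (Θ g)) M N)

/-- `R` is size-change terminating: in the transitive closure of the call graph, every
idempotent matrix labeling a loop has some `−1` on its diagonal. -/
def SCT {F : Type} (R : Rules F) (Θ : F → Trm F) : Prop :=
  ∀ (f : F) (M : ℕ → ℕ → SCTe), TCEdge R Θ f f M → matComp (Trm.piArity (Θ f)) M M = M →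
    ∃ i < Trm.piArity (Θ f), M i i = SCTe.minusOne

/-! The least fixpoint `ℐ` of the monotone operator `F` is reached by transfinite iteration from the
nowhere defined function, so a property of values holds throughout `ℐ` once `F` preserves it. Being
a computability predicate is such a property: `F(I)(T)` is either `SN` or a dependent function space
of values of `I`. Function spaces are handled by noting that, for `t` neutral, neither a `β`-redex
nor an instance of a left-hand side can appear at the root of `t a`, so that `t a` only reduces
inside `t` or inside `a`; an induction on `a ∈ SN` then gives that `t a` is computable.

To iterate inside a complete lattice, we replace the partial functions below `ℐ` by their domains:
they are exactly the restrictions of `ℐ`, and `F` acts monotonically on the sets of arguments to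
which `ℐ` is restricted. -/

section PartialFunctions

variable {α β : Type*}

/-- The restriction of a partial function to the arguments in `s`; here `s` is an arbitrary set,
not necessarily contained in the domain of `f`. -/
def restrictDom (s : Set α) (f : α → Part β) : α → Part β :=
  fun a => Part.assert (a ∈ s) fun _ => f a

theorem mem_restrictDom {s : Set α} {f : α → Part β} {a : α} {b : β} :
    b ∈ restrictDom s f a ↔ a ∈ s ∧ b ∈ f a :=
  Part.mem_assert_iff.trans exists_prop

theorem restrictDom_le (s : Set α) (f : α → Part β) : restrictDom s f ≤ f :=
  fun _ _ hb => (mem_restrictDom.1 hb).2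

theorem restrictDom_mono (f : α → Part β) : Monotone (restrictDom · f) :=
  fun _ _ hst _ _ hb => mem_restrictDom.2 ((mem_restrictDom.1 hb).imp_left (@hst _))

theorem part_eq_of_le_of_dom {o p : Part β} (h : o ≤ p) (ho : o.Dom) : o = p :=
  Part.eq_of_mem ho (h _ (Part.get_mem ho))

theorem part_dom_mono {o p : Part β} (h : o ≤ p) (ho : o.Dom) : p.Dom :=
  part_eq_of_le_of_dom h ho ▸ ho

theorem eq_restrictDom_of_le {f g : α → Part β} (h : g ≤ f) :
    g = restrictDom {a | (g a).Dom} f := by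
  funext a
  ext b
  rw [mem_restrictDom]
  refine ⟨fun hb => ⟨Part.dom_iff_mem.2 ⟨b, hb⟩, h a b hb⟩, fun ⟨ha, hb⟩ => ?_⟩
  rwa [part_eq_of_le_of_dom (h a) ha]

theorem dom_subset_of_isLeast_fixedPoints {φ : (α → Part β) → α → Part β} (hφ : Monotone φ)
    {f : α → Part β} (hf : IsLeast (Function.fixedPoints φ) f) {s : Set α}
    (hs : {a | (φ (restrictDom s f) a).Dom} ⊆ s) : {a | (f a).Dom} ⊆ s := by
  let ψ : Set α →o Set α :=
    ⟨fun t => {a | (φ (restrictDom t f) a).Dom},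
      fun _ _ htu a => part_dom_mono (hφ (restrictDom_mono f htu) a)⟩
  have φ_restrict_le : φ (restrictDom ψ.lfp f) ≤ f := (hφ (restrictDom_le _ f)).trans_eq hf.1
  have restrict_fixed : φ (restrictDom ψ.lfp f) = restrictDom ψ.lfp f :=
    calc φ (restrictDom ψ.lfp f) = restrictDom (ψ ψ.lfp) f := eq_restrictDom_of_le φ_restrict_le
      _ = restrictDom ψ.lfp f := by rw [ψ.map_lfp]
  have f_le_restrict : f ≤ restrictDom ψ.lfp f := hf.2 restrict_fixed
  exact fun a ha => ψ.lfp_le hs (mem_restrictDom.1 (f_le_restrict a _ (Part.get_mem ha))).1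

theorem forall_mem_of_isLeast_fixedPoints {φ : (α → Part β) → α → Part β} (hφ : Monotone φ)
    {f : α → Part β} (hf : IsLeast (Function.fixedPoints φ) f) {P : α → β → Prop}
    (hP : ∀ g, (∀ a, ∀ b ∈ g a, P a b) → ∀ a, ∀ b ∈ φ g a, P a b) :
    ∀ a, ∀ b ∈ f a, P a b := by
  suffices {a | (f a).Dom} ⊆ {a | ∀ b ∈ f a, P a b} from
    fun a b hb => this (Part.dom_iff_mem.2 ⟨b, hb⟩) b hb
  refine dom_subset_of_isLeast_fixedPoints hφ hf fun a ha b hb => ?_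
  have restrict_mem : ∀ c, ∀ d ∈ restrictDom {a | ∀ b ∈ f a, P a b} f c, P c d := fun c d hd =>
    have ⟨hc, hd'⟩ := mem_restrictDom.1 hd
    hc d hd'
  refine hP _ restrict_mem a b ?_
  rwa [part_eq_of_le_of_dom (((hφ (restrictDom_le _ f)).trans_eq hf.1) a) ha]

end PartialFunctions

namespace Trm

variable {F : Type}

/-- The head `h` of a term `h t₁ … tₙ`, where `h` is not an application. -/
def head : Trm F → Trm F
  | .app t _ => head t
  | t => t

/-- The number `n` of arguments of a term `h t₁ … tₙ`, where `h` is not an application. -/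
def numArgs : Trm F → ℕ
  | .app t _ => numArgs t + 1
  | _ => 0

theorem head_appList (h : Trm F) (ts : List (Trm F)) : head (appList h ts) = head h := by
  induction ts generalizing h with
  | nil => rfl
  | cons a _ ih => exact ih (.app h a)

theorem numArgs_appList (h : Trm F) (ts : List (Trm F)) :
    numArgs (appList h ts) = numArgs h + ts.length := by
  induction ts generalizing h with
  | nil => rfl
  | cons a _ ih => rw [appList, ih, numArgs, List.length_cons, Nat.add_right_comm, Nat.add_assoc]

theorem appList_concat (h : Trm F) (ts : List (Trm F)) (a : Trm F) :
    appList h (ts ++ [a]) = .app (appList h ts) a := by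
  induction ts generalizing h with
  | nil => rfl
  | cons b _ ih => exact ih (.app h b)

theorem subst_appList (σ : ℕ → Trm F) (h : Trm F) (ts : List (Trm F)) :
    subst σ (appList h ts) = appList (subst σ h) (ts.map (subst σ)) := by
  induction ts generalizing h with
  | nil => rfl
  | cons a _ ih => exact ih (.app h a)

end Trm

section Reduction

variable {F : Type} {R : Rules F}

/-- Every left-hand side is a function symbol applied to arguments: the shape of rules under which
neither a variable nor a neutral term applied to one more argument is an instance of a left-hand
side. -/
def SymHeaded (R : Rules F) : Prop :=
  ∀ l r, (l, r) ∈ R → ∃ (f : F) (ls : List (Trm F)), l = Trm.appList (.sym f) ls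

theorem IsRewriteSystem.symHeaded (hR : IsRewriteSystem R) : SymHeaded R :=
  fun _ _ hlr => (hR _ hlr).2

theorem normalForm_var (hR : SymHeaded R) (x : ℕ) : NormalForm R (.var x) := by
  intro u hu
  generalize ht : Trm.var x = t at hu
  cases hu with
  | @rule l r σ hlr =>
    obtain ⟨f, ls, rfl⟩ := hR l r hlr
    have heads := congrArg Trm.head ht
    rw [Trm.subst_appList, Trm.head_appList] at heads
    cases heads
  | _ => cases ht

theorem neutral_var (x : ℕ) : Neutral R (.var x) := .inr (.inl ⟨x, [], rfl⟩)

theorem Neutral.ne_pi {t : Trm F} (ht : Neutral R t) (A B : Trm F) : t ≠ .pi A B := by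
  intro h
  have heads := congrArg Trm.head h
  rcases ht with ⟨_, _, _, _, rfl⟩ | ⟨_, _, rfl⟩ | ⟨_, _, rfl, -⟩ <;>
  · rw [Trm.head_appList] at heads
    cases heads

theorem Neutral.ne_lam {t : Trm F} (ht : Neutral R t) (A b : Trm F) : t ≠ .lam A b := by
  intro h
  have heads := congrArg Trm.head h
  rcases ht with ⟨A', b', a, vs, rfl⟩ | ⟨_, _, rfl⟩ | ⟨_, _, rfl, -⟩
  · have lengths := congrArg Trm.numArgs h
    simp only [Trm.numArgs_appList, Trm.numArgs] at lengths
    omega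
  all_goals
    rw [Trm.head_appList] at heads
    cases heads

theorem Neutral.app {t : Trm F} (ht : Neutral R t) (a : Trm F) : Neutral R (.app t a) := by
  rcases ht with ⟨A, b, u, vs, rfl⟩ | ⟨x, vs, rfl⟩ | ⟨f, vs, rfl, hf⟩
  · exact .inl ⟨A, b, u, vs ++ [a], (Trm.appList_concat _ _ _).symm⟩
  · exact .inr (.inl ⟨x, vs ++ [a], (Trm.appList_concat _ _ _).symm⟩)
  · refine .inr (.inr ⟨f, vs ++ [a], (Trm.appList_concat _ _ _).symm, fun ls r hr => ?_⟩)
    exact (hf ls r hr).trans (List.sublist_append_left vs [a]).length_le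

theorem Neutral.app_ne_subst_lhs (hR : SymHeaded R) {t : Trm F} (ht : Neutral R t) {l r : Trm F}
    (hlr : (l, r) ∈ R) (σ : ℕ → Trm F) (a : Trm F) : .app t a ≠ Trm.subst σ l := by
  obtain ⟨f, ls, rfl⟩ := hR l r hlr
  intro h
  have heads : Trm.head t = .sym f := by
    simpa only [Trm.head, Trm.subst_appList, Trm.head_appList, Trm.subst] using congrArg Trm.head h
  have lengths : Trm.numArgs t + 1 = ls.length := by
    simpa only [Trm.numArgs, Trm.subst_appList, Trm.numArgs_appList, Trm.subst, List.length_map,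
      Nat.zero_add] using congrArg Trm.numArgs h
  rcases ht with ⟨_, _, _, _, rfl⟩ | ⟨_, _, rfl⟩ | ⟨g, vs, rfl, hg⟩ <;>
    rw [Trm.head_appList] at heads <;> cases heads
  have ls_le_vs : ls.length ≤ vs.length := hg ls r hlr
  rw [Trm.numArgs_appList] at lengths
  omega

theorem Neutral.red_app_cases (hR : SymHeaded R) {t a u : Trm F} (ht : Neutral R t)
    (h : Red R (.app t a) u) :
    (∃ t', Red R t t' ∧ u = .app t' a) ∨ ∃ a', Red R a a' ∧ u = .app t a' := by
  generalize hs : Trm.app t a = s at h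
  cases h with
  | beta A b _ => cases hs; exact absurd rfl (ht.ne_lam A b)
  | rule σ hlr => exact absurd hs (ht.app_ne_subst_lhs hR hlr σ a)
  | appL h => cases hs; exact .inl ⟨_, h, rfl⟩
  | appR h => cases hs; exact .inr ⟨_, h, rfl⟩
  | _ => cases hs

theorem SN.of_app {t a : Trm F} (h : SN R (.app t a)) : SN R t :=
  Subrelation.accessible (r := InvImage (fun u v => Red R v u) (Trm.app · a)) Red.appL
    (InvImage.accessible (Trm.app · a) h)

end Reduction

section ComputabilityPredicates

variable {F : Type} {R : Rules F} {S : Set (Trm F)}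

theorem isCompPred_SNset : IsCompPred R (SNset R) :=
  ⟨subset_rfl, fun _ ht _ hu => ht.inv hu, fun _ _ h => ⟨_, h⟩⟩

theorem isCompPred_domD (I : Interp F) : IsCompPred R (domD R I) := by
  refine ⟨fun T hT => hT.1, fun T hT U hTU => ⟨hT.1.inv hTU, fun A B hU => ?_⟩,
    fun T hneutral hT => ⟨⟨_, fun U hTU => (hT U hTU).1⟩, fun A B hTpi => ?_⟩⟩
  · exact hT.2 A B (hU.head hTU)
  · rcases hTpi.cases_head with h | ⟨U, hTU, hU⟩
    · exact absurd h (hneutral.ne_pi A B)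
    · exact (hT U hTU).2 A B hU

theorem IsCompPred.var_mem (hR : SymHeaded R) (hS : IsCompPred R S) (x : ℕ) : Trm.var x ∈ S :=
  hS.2.2 _ (neutral_var x) fun u hu => absurd hu (normalForm_var hR x u)

theorem IsCompPred.app_mem_of_neutral (hR : SymHeaded R) (hS : IsCompPred R S) {t a : Trm F}
    (ht : Neutral R t) (ha : SN R a) (h : ∀ u, Red R t u → Trm.app u a ∈ S) :
    Trm.app t a ∈ S := by
  obtain ⟨-, closed, mem_of_neutral⟩ := hS
  induction ha with
  | intro a _ ih =>
    refine mem_of_neutral _ (ht.app a) fun w hw => ?_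
    rcases ht.red_app_cases hR hw with ⟨t', htt', rfl⟩ | ⟨a', haa', rfl⟩
    · exact h t' htt'
    · exact ih a' haa' fun u hu => closed _ (h u hu) _ (.appR haa')

theorem IsCompPred.pi (hR : SymHeaded R) {S' : Trm F → Set (Trm F)} (hS : IsCompPred R S)
    (hS' : ∀ a ∈ S, IsCompPred R (S' a)) :
    IsCompPred R {t | ∀ a ∈ S, Trm.app t a ∈ S' a} := by
  refine ⟨fun t ht => ?_, fun t ht u htu a ha => ?_, fun t hneutral ht a ha => ?_⟩
  · have var_mem := hS.var_mem hR 0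
    exact SN.of_app ((hS' _ var_mem).1 (ht _ var_mem))
  · exact (hS' a ha).2.1 _ (ht a ha) _ (.appL htu)
  · exact (hS' a ha).app_mem_of_neutral hR hneutral (hS.1 ha) fun u htu => ht u htu a ha

end ComputabilityPredicates

section Interpretation

variable {F : Type} {R : Rules F} {I J : Interp F}

theorem partMem_eq_of_mem {T : Trm F} {S : Set (Trm F)} (hS : S ∈ I T) : partMem I T = S :=
  Set.Subset.antisymm (fun _ ht => ht S hS) fun _ ht _ hS' => Part.mem_unique hS hS' ▸ ht

theorem piPart_eq_of_mem {A : Trm F} {S : Set (Trm F)} (hS : S ∈ I A) (B : Trm F) :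
    piPart I A B = {t | ∀ a ∈ S, Trm.app t a ∈ partMem I (Trm.subst1 a B)} :=
  Set.Subset.antisymm (fun _ ht => ht S hS) fun _ ht _ hS' => Part.mem_unique hS hS' ▸ ht

theorem domD_mono (h : I ≤ J) : domD R I ⊆ domD R J := by
  rintro T ⟨hSN, hpi⟩
  refine ⟨hSN, fun A B hAB => ?_⟩
  obtain ⟨hA, hB⟩ := hpi A B hAB
  rw [← part_eq_of_le_of_dom (h A) hA]
  exact ⟨hA, fun S hS a ha => part_dom_mono (h _) (hB S hS a ha)⟩

theorem piPart_eq_of_le (h : I ≤ J) {A B : Trm F} (hA : (I A).Dom)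
    (hB : ∀ S ∈ I A, ∀ a ∈ S, (I (Trm.subst1 a B)).Dom) : piPart I A B = piPart J A B := by
  obtain ⟨S, hS⟩ := Part.dom_iff_mem.1 hA
  rw [piPart_eq_of_mem hS, piPart_eq_of_mem (h A S hS)]
  ext t
  refine forall₂_congr fun a ha => ?_
  rw [partMem, partMem, part_eq_of_le_of_dom (h _) (hB S hS a ha)]

/-- The product normal form selected by choice in `interpF` depends on `T` only, not on the
partial function to which the operator is applied. -/
theorem interpF_eq_SNset_or_piPart (R : Rules F) (T : Trm F) :
    (∀ I S, S ∈ interpF R I T ↔ T ∈ domD R I ∧ S = SNset R) ∨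
      ∃ A B, RedStar R T (.pi A B) ∧
        ∀ I S, S ∈ interpF R I T ↔ T ∈ domD R I ∧ S = piPart I A B := by
  by_cases hT : ∃ A B, RedStar R T (.pi A B) ∧ NormalForm R (.pi A B)
  · refine .inr ⟨_, _, hT.choose_spec.choose_spec.1, fun I S => ?_⟩
    simp only [interpF, dif_pos hT, Part.mem_mk_iff, exists_prop, eq_comm]
  · refine .inl fun I S => ?_
    simp only [interpF, dif_neg hT, Part.mem_mk_iff, exists_prop, eq_comm]

theorem interpF_mono (R : Rules F) : Monotone (interpF R) := by
  intro I J h T S hS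
  rcases interpF_eq_SNset_or_piPart R T with hSN | ⟨A, B, hAB, hpi⟩
  · rw [hSN] at hS ⊢
    exact hS.imp_left (domD_mono h ·)
  · rw [hpi] at hS ⊢
    obtain ⟨hT, rfl⟩ := hS
    obtain ⟨hA, hB⟩ := hT.2 A B hAB
    exact ⟨domD_mono h hT, piPart_eq_of_le h hA hB⟩

theorem isCompPred_of_mem_interpF (hR : SymHeaded R) (hI : ∀ T, ∀ S ∈ I T, IsCompPred R S) :
    ∀ T, ∀ S ∈ interpF R I T, IsCompPred R S := by
  intro T S hS
  rcases interpF_eq_SNset_or_piPart R T with hSN | ⟨A, B, hAB, hpi⟩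
  · obtain ⟨-, rfl⟩ := (hSN I S).1 hS
    exact isCompPred_SNset
  · obtain ⟨hT, rfl⟩ := (hpi I S).1 hS
    obtain ⟨hA, hB⟩ := hT.2 A B hAB
    obtain ⟨SA, hSA⟩ := Part.dom_iff_mem.1 hA
    rw [piPart_eq_of_mem hSA]
    refine (hI A SA hSA).pi hR fun a ha => ?_
    obtain ⟨SB, hSB⟩ := Part.dom_iff_mem.1 (hB SA hSA a ha)
    rw [partMem_eq_of_mem hSB]
    exact hI _ SB hSB

theorem IsLfpInterp.isCompPred_of_mem (hR : SymHeaded R) (hI : IsLfpInterp (interpF R) I) :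
    ∀ T, ∀ S ∈ I T, IsCompPred R S :=
  forall_mem_of_isLeast_fixedPoints (interpF_mono R) ⟨hI.1, fun J => hI.2 J⟩
    fun _ => isCompPred_of_mem_interpF hR

theorem IsLfpInterp.isCompPred_partMem (hR : SymHeaded R) (hI : IsLfpInterp (interpF R) I)
    {T : Trm F} (hT : T ∈ domD R I) : IsCompPred R (partMem I T) := by
  have T_dom : (I T).Dom := by rwa [← hI.1]
  obtain ⟨S, hS⟩ := Part.dom_iff_mem.1 T_dom
  rw [partMem_eq_of_mem hS]
  exact hI.isCompPred_of_mem hR T S hS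

end Interpretation

theorem interp_is_comp_pred_general {F : Type} {R : Rules F} (hR : SymHeaded R) {I : Interp F}
    (hI : IsLfpInterp (interpF R) I) (T : Trm F) (σ : ℕ → Trm F) :
    IsCompPred R (interp R I T σ) := by
  induction T generalizing σ with
  | type | kind => exact isCompPred_domD I
  | pi A B ihA ihB =>
    rw [interp]
    split_ifs with hkind hdom
    · exact (ihA σ).pi hR fun a _ => ihB (Trm.scons a σ)
    · exact hI.isCompPred_partMem hR hdom
    · exact isCompPred_SNset
  | _ =>
    rw [interp]
    split_ifs with hdom
    · exact hI.isCompPred_partMem hR hdom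
    · exact isCompPred_SNset

/-- Lemma 4(a) of the paper. For every term `T` and substitution `σ`,
the interpretation `⟦T⟧σ` is a computability predicate. -/
theorem interp_is_comp_pred {F : Type} (R : Rules F)
    (hRS : IsRewriteSystem R)
    (hconf : LocallyConfluent R)
    (calI : Interp F) (hlfp : IsLfpInterp (interpF R) calI) :
    ∀ (T : Trm F) (σ : ℕ → Trm F), IsCompPred R (interp R calI T σ) :=
  interp_is_comp_pred_general hRS.symHeaded hlfp
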